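/- arXiv:2409.04982 — 2 statements merged into one kernel-verified Lean document; each statement's English description precedes it below -/
import Mathlib

section
/- (Type-II error bound of the cov-norm framework.) Let A be a positive definite real d×d matrix with positive definite square root A^{1/2}, and let μ ∈ ℝ^d. Let X be a random vector in ℝ^d with mean μ_u, positive semidefinite covariance matrix A_u with positive semidefinite square root A_u^{1/2}, and finite second moment. Assume μ_u ≠ μ and let δ satisfy 0 < δ < |A^{-1/2}(μ_u - μ)|. Then P( |A^{-1/2}(X - μ)| < δ ) ≤ d ‖A^{-1/2} A_u^{1/2}‖^2 / ( |A^{-1/2}(μ_u - μ)| - δ )^2, where ‖B‖ denotes the operator norm of the matrix B. -/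
/-!
Write `Y = X - μu`. If `|S⁻¹ (X - μ)| < δ`, the triangle inequality forces
`|S⁻¹ Y| ≥ |S⁻¹ (μu - μ)| - δ > 0`, so Chebyshev's inequality bounds the probability by
`E |S⁻¹ Y|² / (|S⁻¹ (μu - μ)| - δ)²`. The second moment `E |S⁻¹ Y|²` is
`tr (S⁻¹ Au S⁻ᵀ)` (`integral_sum_sq_mulVec`), and since `Au = T Tᵀ` this is the squared Frobenius
norm of `S⁻¹ T`, i.e. the sum over the `d` standard basis vectors `e` of `|S⁻¹ T e|²`, each of which
is at most `‖S⁻¹ T‖²` (`sum_sq_entries_le`).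
-/

open MeasureTheory

/-- The Euclidean norm on `ℝ^d` (as `Fin d → ℝ`). -/
noncomputable def euclNorm {d : ℕ} (v : Fin d → ℝ) : ℝ := Real.sqrt (∑ i, v i ^ 2)

/-- The `ℓ²`-operator norm of a `d × d` real matrix: `‖B‖ = sup_{|v| ≤ 1} |B v|`. -/
noncomputable def matOpNorm {d : ℕ} (B : Matrix (Fin d) (Fin d) ℝ) : ℝ :=
  sSup {r : ℝ | ∃ v : Fin d → ℝ, euclNorm v ≤ 1 ∧ r = euclNorm (B.mulVec v)}

lemma euclNorm_eq_norm {d : ℕ} (v : Fin d → ℝ) : euclNorm v = ‖WithLp.toLp 2 v‖ := by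
  simp [euclNorm, EuclideanSpace.norm_eq]

lemma euclNorm_nonneg {d : ℕ} (v : Fin d → ℝ) : 0 ≤ euclNorm v := Real.sqrt_nonneg _

lemma euclNorm_sq {d : ℕ} (v : Fin d → ℝ) : euclNorm v ^ 2 = ∑ i, v i ^ 2 :=
  Real.sq_sqrt (Finset.sum_nonneg fun _ _ => sq_nonneg _)

lemma euclNorm_sub_le {d : ℕ} (v w : Fin d → ℝ) : euclNorm (v - w) ≤ euclNorm v + euclNorm w := by
  simp only [euclNorm_eq_norm, WithLp.toLp_sub]
  exact norm_sub_le _ _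

/-- The set in the definition of `matOpNorm` is bounded above, so its `sSup` is a genuine
supremum and bounds the image of every vector of the unit ball. -/
lemma euclNorm_mulVec_le_matOpNorm {d : ℕ} (B : Matrix (Fin d) (Fin d) ℝ) (v : Fin d → ℝ)
    (hv : euclNorm v ≤ 1) : euclNorm (B.mulVec v) ≤ matOpNorm B := by
  refine le_csSup ⟨‖Matrix.toEuclideanCLM (𝕜 := ℝ) B‖, ?_⟩ ⟨v, hv, rfl⟩
  rintro r ⟨w, hw, rfl⟩
  rw [euclNorm_eq_norm] at hw ⊢
  rw [← Matrix.toEuclideanCLM_toLp]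
  exact (ContinuousLinearMap.le_opNorm _ _).trans (mul_le_of_le_one_right (norm_nonneg _) hw)

/-- The squared Frobenius norm is at most `d` times the squared operator norm, column by column. -/
lemma sum_sq_entries_le {d : ℕ} (C : Matrix (Fin d) (Fin d) ℝ) :
    ∑ i, ∑ j, C i j ^ 2 ≤ d * matOpNorm C ^ 2 := by
  rw [Finset.sum_comm]
  have hcol : ∀ j, ∑ i, C i j ^ 2 ≤ matOpNorm C ^ 2 := fun j => by
    have h1 : euclNorm (Pi.single j (1 : ℝ)) ≤ 1 := by
      rw [euclNorm_eq_norm]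
      simp
    have h2 := euclNorm_mulVec_le_matOpNorm C _ h1
    have h3 := pow_le_pow_left₀ (euclNorm_nonneg _) h2 2
    rw [euclNorm_sq] at h3
    simpa using h3
  calc ∑ j, ∑ i, C i j ^ 2 ≤ ∑ _j : Fin d, matOpNorm C ^ 2 := Finset.sum_le_sum fun j _ => hcol j
    _ = d * matOpNorm C ^ 2 := by simp

lemma sum_sq_mulVec_expand {d : ℕ} (B : Matrix (Fin d) (Fin d) ℝ) (v : Fin d → ℝ) :
    ∑ i, B.mulVec v i ^ 2 = ∑ i, ∑ j, ∑ k, B i j * B i k * (v j * v k) := by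
  refine Finset.sum_congr rfl fun i _ => ?_
  rw [sq, Matrix.mulVec, dotProduct, Finset.sum_mul_sum]
  refine Finset.sum_congr rfl fun j _ => Finset.sum_congr rfl fun k _ => ?_
  ring

/-- If `Y` has matrix of second moments `M = T Tᵀ`, then `E |B Y|²` is the squared Frobenius norm of
`B T`. -/
lemma integral_sum_sq_mulVec {d : ℕ} {Ω : Type*} [MeasurableSpace Ω] (P : Measure Ω)
    (B T M : Matrix (Fin d) (Fin d) ℝ) (hM : T * T.transpose = M) (Y : Ω → Fin d → ℝ)
    (hY : ∀ i j, Integrable (fun ω => Y ω i * Y ω j) P)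
    (hMY : ∀ i j, M i j = ∫ ω, Y ω i * Y ω j ∂P) :
    ∫ ω, ∑ i, B.mulVec (Y ω) i ^ 2 ∂P = ∑ i, ∑ j, (B * T) i j ^ 2 := by
  have hint : ∀ i j k, Integrable (fun ω => B i j * B i k * (Y ω j * Y ω k)) P :=
    fun i j k => (hY j k).const_mul _
  have hL : ∫ ω, ∑ i, B.mulVec (Y ω) i ^ 2 ∂P = ∑ i, ∑ j, ∑ k, B i j * B i k * M j k := by
    simp_rw [sum_sq_mulVec_expand]
    rw [integral_finsetSum _ fun i _ => integrable_finsetSum _ fun j _ =>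
      integrable_finsetSum _ fun k _ => hint i j k]
    refine Finset.sum_congr rfl fun i _ => ?_
    rw [integral_finsetSum _ fun j _ => integrable_finsetSum _ fun k _ => hint i j k]
    refine Finset.sum_congr rfl fun j _ => ?_
    rw [integral_finsetSum _ fun k _ => hint i j k]
    refine Finset.sum_congr rfl fun k _ => ?_
    rw [integral_const_mul, hMY]
  rw [hL]
  refine Finset.sum_congr rfl fun i _ => ?_
  -- Both sides are the `i`-th diagonal entry of `B M Bᵀ = (B T) (B T)ᵀ`.
  have h1 : ∑ j, (B * T) i j ^ 2 = ((B * T) * (B * T).transpose) i i := by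
    rw [Matrix.mul_apply]
    exact Finset.sum_congr rfl fun j _ => by rw [Matrix.transpose_apply, sq]
  have h2 : (B * T) * (B * T).transpose = B * (M * B.transpose) := by
    rw [Matrix.transpose_mul, ← hM]
    simp only [Matrix.mul_assoc]
  rw [h1, h2, Matrix.mul_apply]
  refine Finset.sum_congr rfl fun j _ => ?_
  rw [Matrix.mul_apply, Finset.mul_sum]
  refine Finset.sum_congr rfl fun k _ => ?_
  rw [Matrix.transpose_apply]
  ring

/-- Type-II error bound of the cov-norm framework: with `A` positive
definite with positive definite square root `S`, `μ ∈ ℝ^d`, and `X` a random vector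
with mean `μu ≠ μ` and positive semidefinite covariance `Au` with positive
semidefinite square root `T`, for `0 < δ < |A^{-1/2}(μu - μ)|` one has
`P(|A^{-1/2}(X - μ)| < δ) ≤ d ‖A^{-1/2} Au^{1/2}‖² / (|A^{-1/2}(μu - μ)| - δ)²`. -/
theorem covNorm_typeII_bound
    {d : ℕ} {Ω : Type*} [MeasurableSpace Ω] (P : Measure Ω) [IsProbabilityMeasure P]
    (A : Matrix (Fin d) (Fin d) ℝ) (hApos : A.PosDef)
    (S : Matrix (Fin d) (Fin d) ℝ) (hS : S.PosDef) (hSA : S * S = A)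
    (μ : Fin d → ℝ)
    (X : Ω → Fin d → ℝ) (hX : Measurable X)
    (hX1 : ∀ i, Integrable (fun ω => X ω i) P)
    (hX2 : ∀ i j, Integrable (fun ω => X ω i * X ω j) P)
    (μu : Fin d → ℝ) (hμu : ∀ i, μu i = ∫ ω, X ω i ∂P)
    (Au : Matrix (Fin d) (Fin d) ℝ)
    (hAu : ∀ i j, Au i j = ∫ ω, (X ω i - μu i) * (X ω j - μu j) ∂P)
    (hAupsd : Au.PosSemidef)
    (T : Matrix (Fin d) (Fin d) ℝ) (hT : T.PosSemidef) (hTT : T * T = Au)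
    (hμne : μu ≠ μ)
    (δ : ℝ) (hδ0 : 0 < δ) (hδ1 : δ < euclNorm (S⁻¹.mulVec (μu - μ))) :
    P {ω | euclNorm (S⁻¹.mulVec (X ω - μ)) < δ}
      ≤ ENNReal.ofReal (d * matOpNorm (S⁻¹ * T) ^ 2
          / (euclNorm (S⁻¹.mulVec (μu - μ)) - δ) ^ 2) := by
  set r := euclNorm (S⁻¹.mulVec (μu - μ)) - δ with hr
  have hrpos : 0 < r := sub_pos.mpr hδ1
  have hY : ∀ i j, Integrable (fun ω => (X ω - μu) i * (X ω - μu) j) P := fun i j => by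
    have h := (((hX2 i j).sub ((hX1 i).mul_const (μu j))).sub ((hX1 j).const_mul (μu i))).add
      (integrable_const (μu i * μu j))
    refine h.congr (Filter.Eventually.of_forall fun ω => ?_)
    simp only [Pi.add_apply, Pi.sub_apply]
    ring
  have hTTt : T * T.transpose = Au := by
    have h : T.transpose = T := by simpa using hT.isHermitian.eq
    rw [h, hTT]
  have hE := integral_sum_sq_mulVec P S⁻¹ T Au hTTt (fun ω => X ω - μu) hY hAu
  have hfint : Integrable (fun ω => ∑ i, S⁻¹.mulVec (X ω - μu) i ^ 2) P := by
    simp_rw [sum_sq_mulVec_expand]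
    exact integrable_finsetSum _ fun i _ => integrable_finsetSum _ fun j _ =>
      integrable_finsetSum _ fun k _ => (hY j k).const_mul _
  have hcheb := mul_meas_ge_le_integral_of_nonneg (μ := P)
    (Filter.Eventually.of_forall fun ω => Finset.sum_nonneg fun i _ =>
      sq_nonneg (S⁻¹.mulVec (X ω - μu) i)) hfint (r ^ 2)
  have hsub : {ω | euclNorm (S⁻¹.mulVec (X ω - μ)) < δ}
      ⊆ {ω | r ^ 2 ≤ ∑ i, S⁻¹.mulVec (X ω - μu) i ^ 2} := fun ω hω => by
    have hdecomp : S⁻¹.mulVec (μu - μ) = S⁻¹.mulVec (X ω - μ) - S⁻¹.mulVec (X ω - μu) := by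
      rw [← Matrix.mulVec_sub]
      congr 1
      abel
    have htri := euclNorm_sub_le (S⁻¹.mulVec (X ω - μ)) (S⁻¹.mulVec (X ω - μu))
    rw [← hdecomp] at htri
    have hω' : euclNorm (S⁻¹.mulVec (X ω - μ)) < δ := hω
    rw [Set.mem_ofPred_eq, ← euclNorm_sq]
    exact pow_le_pow_left₀ hrpos.le (by linarith) 2
  refine (measure_mono hsub).trans ?_
  rw [← ofReal_measureReal]
  refine ENNReal.ofReal_le_ofReal ?_
  rw [le_div_iff₀ (by positivity), mul_comm]
  exact hcheb.trans (hE.le.trans (sum_sq_entries_le _))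
end

section
/- (Area increment formula for a smooth functional of an image, Eqn. (f_area).) Let f : ℝ^d → ℝ and x : ℝ^2 → ℝ^d both be twice continuously differentiable, and let s1 ≤ s2, t1 ≤ t2. Then f(x(s2,t2)) − f(x(s1,t2)) − f(x(s2,t1)) + f(x(s1,t1)) = ∑_{i=1}^d ∬_{[s1,s2]×[t1,t2]} (∂f/∂x^i)(x(s,t)) · ∂²x^i/∂s∂t (s,t) ds dt + ∑_{i=1}^d ∑_{j=1}^d ∬_{[s1,s2]×[t1,t2]} (∂²f/∂x^i∂x^j)(x(s,t)) · ∂x^i/∂s (s,t) · ∂x^j/∂t (s,t) ds dt. -/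
open MeasureTheory Finset

/-!
The formula is the fundamental theorem of calculus applied twice to `(s, t) ↦ f (x s t)`. The
chain rule gives `∂ₛ(f ∘ x) = ∑ i, ∂ᵢf(x) ∂ₛxⁱ`, which is again continuously differentiable since
`f` and `x` are `C²`. Differentiating it in `t` with the product and chain rules, and using the
symmetry of the second derivative of `f`, gives exactly the sum of the integrands. Fubini for
continuous integrands (`integral_mixed_deriv_eq_increment`) then matches the order of integration.
-/

/-- A function on the plane differentiable at a point has as partial derivative in the first
variable the value of its Fréchet derivative at `(1, 0)`. -/
lemma hasDerivAt_fst_slice {E : Type*} [NormedAddCommGroup E] [NormedSpace ℝ E]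
    {F : ℝ × ℝ → E} {s t : ℝ} (hF : DifferentiableAt ℝ F (s, t)) :
    HasDerivAt (fun s' => F (s', t)) (fderiv ℝ F (s, t) (1, 0)) s := by
  have h : HasDerivAt (fun s' : ℝ => (s', t)) ((1 : ℝ), (0 : ℝ)) s :=
    (hasDerivAt_id s).prodMk (hasDerivAt_const s t)
  exact hF.hasFDerivAt.comp_hasDerivAt s h

/-- The counterpart of `hasDerivAt_fst_slice` for the second variable. -/
lemma hasDerivAt_snd_slice {E : Type*} [NormedAddCommGroup E] [NormedSpace ℝ E]
    {F : ℝ × ℝ → E} {s t : ℝ} (hF : DifferentiableAt ℝ F (s, t)) :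
    HasDerivAt (fun t' => F (s, t')) (fderiv ℝ F (s, t) (0, 1)) t := by
  have h : HasDerivAt (fun t' : ℝ => (s, t')) ((0 : ℝ), (1 : ℝ)) t :=
    (hasDerivAt_const t s).prodMk (hasDerivAt_id t)
  exact hF.hasFDerivAt.comp_hasDerivAt t h

/-- The double integral of a continuous mixed derivative `K = ∂ₜ∂ₛg` is the rectangular increment
of `g`. Since `∂ₛ` is the derivative taken first, the `t`-integral has to be evaluated first, which
is why Fubini is needed. -/
lemma integral_mixed_deriv_eq_increment {g : ℝ → ℝ → ℝ} {H K : ℝ × ℝ → ℝ}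
    (hg : ∀ s t, HasDerivAt (fun s' => g s' t) (H (s, t)) s)
    (hH : ∀ s t, HasDerivAt (fun t' => H (s, t')) (K (s, t)) t)
    (cH : Continuous H) (cK : Continuous K) (s1 s2 t1 t2 : ℝ) :
    ∫ t in t1..t2, ∫ s in s1..s2, K (s, t)
      = g s2 t2 - g s1 t2 - g s2 t1 + g s1 t1 := by
  have swap : ∫ t in t1..t2, ∫ s in s1..s2, K (s, t) = ∫ s in s1..s2, ∫ t in t1..t2, K (s, t) := by
    refine intervalIntegral_intervalIntegral_swap (F := fun t s => K (s, t)) ?_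
    have h : Continuous fun p : ℝ × ℝ => K (p.2, p.1) := by fun_prop
    exact (h.continuousOn.integrableOn_compact (μ := volume)
      (isCompact_uIcc.prod isCompact_uIcc)).mono_set
      (Set.prod_mono Set.uIoc_subset_uIcc Set.uIoc_subset_uIcc)
  have inner : ∀ s, ∫ t in t1..t2, K (s, t) = H (s, t2) - H (s, t1) := fun s =>
    intervalIntegral.integral_eq_sub_of_hasDerivAt (fun t _ => hH s t)
      ((cK.comp (by fun_prop : Continuous fun t : ℝ => (s, t))).intervalIntegrable _ _)
  have cHs : ∀ t, Continuous fun s => H (s, t) := fun t => by fun_prop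
  have outer : ∀ t, ∫ s in s1..s2, H (s, t) = g s2 t - g s1 t := fun t =>
    intervalIntegral.integral_eq_sub_of_hasDerivAt (fun s _ => hg s t)
      ((cHs t).intervalIntegrable _ _)
  simp_rw [swap, inner]
  rw [intervalIntegral.integral_sub ((cHs t2).intervalIntegrable _ _)
    ((cHs t1).intervalIntegrable _ _), outer, outer]
  ring

/-- The double interval integral commutes with finite sums of continuous integrands. -/
lemma sum_double_integral {ι : Type*} [Fintype ι] {G : ι → ℝ × ℝ → ℝ}
    (hG : ∀ i, Continuous (G i)) (s1 s2 t1 t2 : ℝ) :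
    ∑ i, ∫ t in t1..t2, ∫ s in s1..s2, G i (s, t)
      = ∫ t in t1..t2, ∫ s in s1..s2, ∑ i, G i (s, t) := by
  have hs : ∀ i t, IntervalIntegrable (fun s => G i (s, t)) volume s1 s2 := fun i t =>
    ((hG i).comp (by fun_prop : Continuous fun s : ℝ => (s, t))).intervalIntegrable _ _
  have ht : ∀ i, IntervalIntegrable (fun t => ∫ s in s1..s2, G i (s, t)) volume t1 t2 := fun i =>
    (intervalIntegral.continuous_parametric_intervalIntegral_of_continuous'
      (f := fun t s => G i (s, t))
      ((hG i).comp continuous_swap) s1 s2).intervalIntegrable _ _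
  rw [← intervalIntegral.integral_finsetSum fun i _ => ht i]
  congr 1 with t
  rw [← intervalIntegral.integral_finsetSum fun i _ => hs i t]

/-- The value of a continuous linear map on `ℝ^d` is the sum of its values on the standard basis
weighted by the coordinates. -/
lemma clm_apply_eq_sum {d : ℕ} {E : Type*} [NormedAddCommGroup E] [NormedSpace ℝ E]
    (L : (Fin d → ℝ) →L[ℝ] E) (v : Fin d → ℝ) :
    L v = ∑ i, v i • L (Pi.single i 1) := by
  conv_lhs => rw [pi_eq_sum_univ' v, map_sum]
  simp

/-- Area increment formula for a smooth functional of an image: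
for `f : ℝ^d → ℝ` and `x : ℝ² → ℝ^d` both twice continuously differentiable and
`s1 ≤ s2`, `t1 ≤ t2`,
`f(x(s2,t2)) − f(x(s1,t2)) − f(x(s2,t1)) + f(x(s1,t1))
  = ∑ i ∬ (∂f/∂x^i)(x(s,t)) ∂²x^i/∂s∂t ds dt
    + ∑ i ∑ j ∬ (∂²f/∂x^i∂x^j)(x(s,t)) (∂x^i/∂s)(∂x^j/∂t) ds dt`. -/
theorem area_increment_formula
    {d : ℕ} (f : (Fin d → ℝ) → ℝ) (hf : ContDiff ℝ 2 f)
    (x : ℝ → ℝ → Fin d → ℝ)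
    (hx : ContDiff ℝ 2 (fun p : ℝ × ℝ => x p.1 p.2))
    (s1 s2 t1 t2 : ℝ) (hs : s1 ≤ s2) (ht : t1 ≤ t2) :
    f (x s2 t2) - f (x s1 t2) - f (x s2 t1) + f (x s1 t1)
      = (∑ i, ∫ t in t1..t2, ∫ s in s1..s2,
            fderiv ℝ f (x s t) (Pi.single i 1)
              * deriv (fun t' => deriv (fun s' => x s' t' i) s) t)
        + ∑ i, ∑ j, ∫ t in t1..t2, ∫ s in s1..s2,
            (fderiv ℝ (fderiv ℝ f) (x s t) (Pi.single i 1)) (Pi.single j 1)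
              * deriv (fun s' => x s' t i) s * deriv (fun t' => x s t' j) t := by
  set X : ℝ × ℝ → Fin d → ℝ := fun p => x p.1 p.2 with hX
  -- `A i = ∂ₛxⁱ`, `B j = ∂ₜxʲ` and `C i = ∂ₜ∂ₛxⁱ`, as functions on the plane.
  set A : Fin d → ℝ × ℝ → ℝ := fun i p => fderiv ℝ X p (1, 0) i with hA
  set B : Fin d → ℝ × ℝ → ℝ := fun j p => fderiv ℝ X p (0, 1) j with hB
  set C : Fin d → ℝ × ℝ → ℝ := fun i p => fderiv ℝ (A i) p (0, 1) with hC
  have dX : Differentiable ℝ X := hx.differentiable (by norm_num)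
  have hX' : ContDiff ℝ 1 (fderiv ℝ X) := hx.fderiv_right (by norm_num)
  have hf' : ContDiff ℝ 1 (fderiv ℝ f) := hf.fderiv_right (by norm_num)
  have cX : Continuous X := hx.continuous
  have cA1 : ∀ i, ContDiff ℝ 1 (A i) := fun i =>
    (contDiff_apply ℝ ℝ i).comp (hX'.clm_apply contDiff_const)
  have cA : ∀ i, Continuous (A i) := fun i => (cA1 i).continuous
  have cB : ∀ i, Continuous (B i) := fun i =>
    (continuous_apply i).comp (hX'.continuous.clm_apply continuous_const)
  have cC : ∀ i, Continuous (C i) := fun i =>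
    ((cA1 i).continuous_fderiv (by norm_num)).clm_apply continuous_const
  have cf' : Continuous (fderiv ℝ f) := hf'.continuous
  have cf'' : Continuous (fderiv ℝ (fderiv ℝ f)) := hf'.continuous_fderiv (by norm_num)
  have dA : ∀ i s t, HasDerivAt (fun s' => x s' t i) (A i (s, t)) s := fun i s t =>
    hasDerivAt_pi.1 (hasDerivAt_fst_slice (dX (s, t))) i
  have dB' : ∀ s t, HasDerivAt (fun t' => x s t') (fderiv ℝ X (s, t) (0, 1)) t := fun s t =>
    hasDerivAt_snd_slice (dX (s, t))
  have dB : ∀ j s t, HasDerivAt (fun t' => x s t' j) (B j (s, t)) t := fun j s t =>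
    hasDerivAt_pi.1 (dB' s t) j
  have dC : ∀ i s t, HasDerivAt (fun t' => A i (s, t')) (C i (s, t)) t := fun i s t =>
    hasDerivAt_snd_slice ((cA1 i).differentiable (by norm_num) (s, t))
  simp_rw [fun i s t => (dA i s t).deriv, fun i s t => (dB i s t).deriv,
    fun i s t => (dC i s t).deriv]
  -- The integrands of the single sum (`P`) and of the double sum (`Q`).
  set P : Fin d → ℝ × ℝ → ℝ := fun i p => fderiv ℝ f (X p) (Pi.single i 1) * C i p with hP
  set Q : Fin d → Fin d → ℝ × ℝ → ℝ := fun i j p =>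
    fderiv ℝ (fderiv ℝ f) (X p) (Pi.single i 1) (Pi.single j 1) * A i p * B j p with hQ
  have cP : ∀ i, Continuous (P i) := fun i =>
    ((cf'.comp cX).clm_apply continuous_const).mul (cC i)
  have cQ : ∀ i j, Continuous (Q i j) := fun i j =>
    ((((cf''.comp cX).clm_apply continuous_const).clm_apply continuous_const).mul (cA i)).mul (cB j)
  have cQ' : ∀ i, Continuous fun p => ∑ j, Q i j p := fun i =>
    continuous_finsetSum _ fun j _ => cQ i j
  have hH : ∀ s t, HasDerivAt (fun s' => f (x s' t))
      ((fun p => ∑ i, fderiv ℝ f (X p) (Pi.single i 1) * A i p) (s, t)) s := by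
    intro s t
    have h := ((hf.differentiable (by norm_num)) (x s t)).hasFDerivAt.comp_hasDerivAt s
      (hasDerivAt_fst_slice (dX (s, t)))
    refine h.congr_deriv ?_
    rw [clm_apply_eq_sum]
    exact sum_congr rfl fun i _ => mul_comm _ _
  have hK : ∀ s t, HasDerivAt
      (fun t' => (fun p => ∑ i, fderiv ℝ f (X p) (Pi.single i 1) * A i p) (s, t'))
      ((fun p => ∑ i, (P i p + ∑ j, Q i j p)) (s, t)) t := by
    intro s t
    refine HasDerivAt.fun_sum fun i _ => ?_
    have h1 := ((hf'.differentiable (by norm_num)) (x s t)).hasFDerivAt.comp_hasDerivAt t (dB' s t)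
    have h2 := (h1.clm_apply (hasDerivAt_const t (Pi.single i (1 : ℝ)))).mul (dC i s t)
    refine h2.congr_deriv ?_
    have sym : IsSymmSndFDerivAt ℝ f (x s t) :=
      hf.contDiffAt.isSymmSndFDerivAt (by simp)
    simp only [map_zero, add_zero]
    -- Symmetry moves the basis vector `eᵢ` to the first slot; `∂ₜx`, now in the second slot, is then
    -- expanded in coordinates.
    rw [sym.eq, clm_apply_eq_sum (fderiv ℝ (fderiv ℝ f) (x s t) (Pi.single i 1)), sum_mul, add_comm]
    congr 1
    refine sum_congr rfl fun j _ => ?_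
    simp only [hQ, hB, hX, smul_eq_mul]
    ring
  have key := integral_mixed_deriv_eq_increment hH hK
    (continuous_finsetSum _ fun i _ => ((cf'.comp cX).clm_apply continuous_const).mul (cA i))
    (continuous_finsetSum _ fun i _ => (cP i).add (cQ' i)) s1 s2 t1 t2
  rw [← key]
  change _ = (∑ i, ∫ t in t1..t2, ∫ s in s1..s2, P i (s, t))
    + ∑ i, ∑ j, ∫ t in t1..t2, ∫ s in s1..s2, Q i j (s, t)
  simp_rw [fun i => sum_double_integral (cQ i) s1 s2 t1 t2]
  rw [← sum_double_integral fun i => (cP i).add (cQ' i), ← sum_add_distrib]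
  refine sum_congr rfl fun i _ => ?_
  -- Additivity of the double integral, as the case of a sum over `Fin 2`.
  have h := sum_double_integral (G := ![P i, fun p => ∑ j, Q i j p])
    (by simp [Fin.forall_fin_two, cP i, cQ' i]) s1 s2 t1 t2
  simpa [Fin.sum_univ_two] using h.symm
end
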